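/- arXiv:0907.4663 — 2 statements merged into one kernel-verified Lean document; each statement's English description precedes it below -/
import Mathlib

section
/- Let H be a real Hilbert space, S ⊆ H a closed linear subspace and C ⊆ H a nonempty closed convex subset such that Proj_C(S) ⊆ S. Then C ∩ S is nonempty, and for every x ∈ H the metric projection onto C ∩ S factors as Proj_{C∩S}(x) = Proj_C(Proj_S(x)). -/
open InnerProductSpace

/-- `p` is the metric projection of `x` onto the set `C`:
it belongs to `C` and is a nearest point of `C` to `x`. -/
def IsMetricProj {H : Type*} [NormedAddCommGroup H] (C : Set H) (x p : H) : Prop :=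
  p ∈ C ∧ ∀ y ∈ C, ‖x - p‖ ≤ ‖x - y‖

/-!
If `q` is a nearest point to `x` in an affine subspace `S`, then `x - q` is orthogonal to the
direction of `S`, so by Pythagoras `‖x - z‖ ^ 2` and `‖q - z‖ ^ 2` differ by a constant as `z`
ranges over `S`. Hence `x` and `q` have the same nearest points in every subset of `S`, in
particular in `C ∩ S`; and a nearest point to `q` in `C` that lies in `S` is also nearest in
`C ∩ S`.
-/

namespace IsMetricProj

variable {H : Type*} [NormedAddCommGroup H] {C : Set H} {x y z p q : H}

theorem norm_sub_eq_iInf (h : IsMetricProj C x p) : ‖x - p‖ = ⨅ w : C, ‖x - w‖ := by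
  have hleast : IsLeast (Set.range fun w : C => ‖x - w‖) ‖x - p‖ :=
    ⟨⟨⟨p, h.1⟩, rfl⟩, Set.forall_mem_range.2 fun w => h.2 w w.2⟩
  exact hleast.csInf_eq.symm

theorem mono {D : Set H} (h : IsMetricProj C x p) (hDC : D ⊆ C) (hp : p ∈ D) :
    IsMetricProj D x p :=
  ⟨hp, fun y hy => h.2 y (hDC hy)⟩

variable [InnerProductSpace ℝ H] {S : AffineSubspace ℝ H}

theorem inner_sub_sub_nonpos (h : IsMetricProj C x p) (hC : Convex ℝ C) (hz : z ∈ C) :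
    ⟪x - p, z - p⟫_ℝ ≤ 0 :=
  (norm_eq_iInf_iff_real_inner_le_zero hC h.1).1 h.norm_sub_eq_iInf z hz

theorem inner_sub_eq_zero (h : IsMetricProj (S : Set H) x q) {v : H} (hv : v ∈ S.direction) :
    ⟪x - q, v⟫_ℝ = 0 := by
  have nonpos : ∀ w ∈ S.direction, ⟪x - q, w⟫_ℝ ≤ 0 := fun w hw => by
    have hwq : w + q ∈ S := AffineSubspace.vadd_mem_of_mem_direction hw h.1
    simpa only [add_sub_cancel_right] using h.inner_sub_sub_nonpos S.convex hwq
  have nonneg : 0 ≤ ⟪x - q, v⟫_ℝ := by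
    simpa only [inner_neg_right, neg_nonpos] using nonpos (-v) (neg_mem hv)
  exact le_antisymm (nonpos v hv) nonneg

theorem norm_sub_sq_eq_add (h : IsMetricProj (S : Set H) x q) (hz : z ∈ S) :
    ‖x - z‖ ^ 2 = ‖x - q‖ ^ 2 + ‖q - z‖ ^ 2 := by
  have horth : ⟪x - q, q - z⟫_ℝ = 0 :=
    h.inner_sub_eq_zero (AffineSubspace.vsub_mem_direction h.1 hz)
  simpa only [sub_add_sub_cancel, ← sq] using
    norm_add_sq_eq_norm_sq_add_norm_sq_real horth

theorem norm_sub_le_norm_sub_iff (h : IsMetricProj (S : Set H) x q) (hy : y ∈ S) (hz : z ∈ S) :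
    ‖x - y‖ ≤ ‖x - z‖ ↔ ‖q - y‖ ≤ ‖q - z‖ := by
  rw [← sq_le_sq₀ (norm_nonneg (x - y)) (norm_nonneg (x - z)), h.norm_sub_sq_eq_add hy,
    h.norm_sub_sq_eq_add hz, add_le_add_iff_left, sq_le_sq₀ (norm_nonneg _) (norm_nonneg _)]

theorem iff_of_subset (h : IsMetricProj (S : Set H) x q) (hCS : C ⊆ S) :
    IsMetricProj C x p ↔ IsMetricProj C q p :=
  and_congr_right fun hp => forall₂_congr fun _ hy =>
    h.norm_sub_le_norm_sub_iff (hCS hp) (hCS hy)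

theorem inter (hS : IsMetricProj (S : Set H) x q) (hC : IsMetricProj C q p) (hp : p ∈ S) :
    IsMetricProj (C ∩ S) x p :=
  (hS.iff_of_subset Set.inter_subset_right).2 (hC.mono Set.inter_subset_left ⟨hC.1, hp⟩)

end IsMetricProj

theorem stmt0_general {H : Type*} [NormedAddCommGroup H] [InnerProductSpace ℝ H]
    (S : AffineSubspace ℝ H) (C : Set H)
    (projC : H → H) (hprojC : ∀ s ∈ S, IsMetricProj C s (projC s))
    (projS : H → H) (hprojS : ∀ x, IsMetricProj (S : Set H) x (projS x))
    (hCS : ∀ s ∈ S, projC s ∈ S) :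
    (C ∩ (S : Set H)).Nonempty ∧
      ∀ x, IsMetricProj (C ∩ (S : Set H)) x (projC (projS x)) := by
  have hproj (x : H) : IsMetricProj (C ∩ (S : Set H)) x (projC (projS x)) :=
    have hx : projS x ∈ S := (hprojS x).1
    (hprojS x).inter (hprojC _ hx) (hCS _ hx)
  exact ⟨⟨_, (hproj 0).1⟩, hproj⟩

/-- If `S` is a closed linear subspace and `C` a nonempty closed convex subset of a real
Hilbert space such that the metric projection onto `C` maps `S` into `S`, then `C ∩ S` is
nonempty and the metric projection onto `C ∩ S` factors as `Proj_C ∘ Proj_S`. -/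
theorem stmt0 {H : Type*} [NormedAddCommGroup H] [InnerProductSpace ℝ H] [CompleteSpace H]
    (S : Submodule ℝ H) (hScl : IsClosed (S : Set H))
    (C : Set H) (hCne : C.Nonempty) (hCcl : IsClosed C) (hCcv : Convex ℝ C)
    (projC : H → H) (hprojC : ∀ x, IsMetricProj C x (projC x))
    (projS : H → H) (hprojS : ∀ x, IsMetricProj (S : Set H) x (projS x))
    (hCS : ∀ s ∈ S, projC s ∈ S) :
    (C ∩ (S : Set H)).Nonempty ∧
      ∀ x, IsMetricProj (C ∩ (S : Set H)) x (projC (projS x)) :=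
  stmt0_general S.toAffineSubspace C projC (fun s _ => hprojC s) projS hprojS hCS
end

section
/- If u ∈ 𝒰 is a.e. equal to a G-measurable function, then Proj_{𝒰^as}(u) is a.e. equal to a G-measurable function; that is, the metric projection onto the almost-sure constraint set maps the measurability subspace into itself: Proj_{𝒰^as}(𝒰^me) ⊆ 𝒰^me. -/
open MeasureTheory

/-!
Let `π` be the metric projection onto `Γ` and let `v` be an `L^p` projection of `u` onto the
functions with values in `Γ`, `p < ∞`. Then `π ∘ u` is a competitor of `v` which is at least as
close to `u` at almost every point, so minimality of `v` forces the two pointwise distances to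
agree almost everywhere, and uniqueness of projections gives `v = π ∘ u` almost everywhere. As `π`
is nonexpansive, composing with it preserves measurability with respect to any σ-algebra.
-/

open scoped ENNReal NNReal RealInnerProductSpace

theorem isMetricProj_iff_norm_sub_eq_iInf {E : Type*} [NormedAddCommGroup E] {K : Set E}
    {x p : E} (hp : p ∈ K) : IsMetricProj K x p ↔ ‖x - p‖ = ⨅ w : K, ‖x - w‖ := by
  have : Nonempty K := ⟨⟨p, hp⟩⟩
  have hbdd : BddBelow (Set.range fun w : K => ‖x - w‖) :=
    ⟨0, Set.forall_mem_range.2 fun _ => norm_nonneg _⟩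
  constructor
  · intro h
    exact le_antisymm (le_ciInf fun w => h.2 w w.2) (ciInf_le hbdd ⟨p, hp⟩)
  · intro h
    exact ⟨hp, fun w hw => h.trans_le (ciInf_le hbdd ⟨w, hw⟩)⟩

section InnerProductSpace

variable {E : Type*} [NormedAddCommGroup E] [InnerProductSpace ℝ E] {K : Set E} {x y p q : E}

theorem exists_isMetricProj (hne : K.Nonempty) (hK : IsComplete K) (hconv : Convex ℝ K) (x : E) :
    ∃ p, IsMetricProj K x p := by
  obtain ⟨p, hpK, hp⟩ := exists_norm_eq_iInf_of_complete_convex hne hK hconv x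
  exact ⟨p, (isMetricProj_iff_norm_sub_eq_iInf hpK).2 hp⟩

namespace IsMetricProj

theorem inner_sub_sub_nonpos_s5 (hconv : Convex ℝ K) (hp : IsMetricProj K x p) (hy : y ∈ K) :
    ⟪x - p, y - p⟫ ≤ 0 :=
  (norm_eq_iInf_iff_real_inner_le_zero hconv hp.1).1
    ((isMetricProj_iff_norm_sub_eq_iInf hp.1).1 hp) y hy

theorem norm_sub_le_norm_sub (hconv : Convex ℝ K) (hp : IsMetricProj K x p)
    (hq : IsMetricProj K y q) : ‖p - q‖ ≤ ‖x - y‖ := by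
  have hxp : ⟪x - p, q - p⟫ ≤ 0 := hp.inner_sub_sub_nonpos_s5 hconv hq.1
  have hyq : ⟪y - q, p - q⟫ ≤ 0 := hq.inner_sub_sub_nonpos_s5 hconv hp.1
  have hsq : ‖p - q‖ * ‖p - q‖ ≤ ‖x - y‖ * ‖p - q‖ := calc
    ‖p - q‖ * ‖p - q‖ = ⟪p - q, p - q⟫ := (real_inner_self_eq_norm_mul_norm _).symm
    _ = ⟪x - y, p - q⟫ + ⟪x - p, q - p⟫ + ⟪y - q, p - q⟫ := by
      simp only [inner_sub_left, inner_sub_right]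
      ring
    _ ≤ ⟪x - y, p - q⟫ := by linarith
    _ ≤ ‖x - y‖ * ‖p - q‖ := real_inner_le_norm _ _
  rcases (norm_nonneg (p - q)).eq_or_lt with hzero | hpos
  · exact hzero ▸ norm_nonneg _
  · exact le_of_mul_le_mul_right hsq hpos

theorem unique (hconv : Convex ℝ K) (hp : IsMetricProj K x p) (hq : IsMetricProj K x q) :
    p = q := by
  simpa [sub_eq_zero] using hp.norm_sub_le_norm_sub hconv hq

end IsMetricProj

theorem lipschitzWith_one_of_isMetricProj (hconv : Convex ℝ K) {π : E → E}
    (hπ : ∀ x, IsMetricProj K x (π x)) : LipschitzWith 1 π :=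
  LipschitzWith.of_dist_le_mul fun x y => by
    simpa [dist_eq_norm] using (hπ x).norm_sub_le_norm_sub hconv (hπ y)

end InnerProductSpace

section Lp

variable {α E F : Type*} [NormedAddCommGroup E] [NormedAddCommGroup F] {m : MeasurableSpace α}
  {μ : Measure α} {p : ℝ≥0∞}

theorem memLp_comp_of_lipschitzWith {φ : E → F} {C : ℝ≥0} (hφ : LipschitzWith C φ)
    {f g : α → E} (hf : MemLp f p μ) (hg : MemLp g p μ) (hφg : MemLp (φ ∘ g) p μ) :
    MemLp (φ ∘ f) p μ := by
  have hdiff : MemLp (φ ∘ f - φ ∘ g) p μ :=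
    (hf.sub hg).of_le_mul
      ((hφ.continuous.comp_aestronglyMeasurable hf.1).sub hφg.1)
      (ae_of_all _ fun x => hφ.norm_sub_le (f x) (g x))
  simpa using hdiff.add hφg

theorem ae_norm_eq_of_ae_norm_le_of_norm_le (hp₀ : p ≠ 0) (hp : p ≠ ∞) {f : Lp E p μ}
    {g : Lp F p μ} (hfg : ∀ᵐ x ∂μ, ‖f x‖ ≤ ‖g x‖) (hgf : ‖g‖ ≤ ‖f‖) :
    ∀ᵐ x ∂μ, ‖f x‖ = ‖g x‖ := by
  have hpos : 0 < p.toReal := ENNReal.toReal_pos hp₀ hp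
  have hle : (fun x => ‖f x‖ₑ ^ p.toReal) ≤ᵐ[μ] fun x => ‖g x‖ₑ ^ p.toReal := by
    filter_upwards [hfg] with x hx
    exact ENNReal.rpow_le_rpow (enorm_le_iff_norm_le.2 hx) hpos.le
  have hint : ∫⁻ x, ‖g x‖ₑ ^ p.toReal ∂μ ≤ ∫⁻ x, ‖f x‖ₑ ^ p.toReal ∂μ := by
    have hnorm : eLpNorm g p μ ≤ eLpNorm f p μ :=
      (ENNReal.toReal_le_toReal (Lp.eLpNorm_ne_top g) (Lp.eLpNorm_ne_top f)).1 hgf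
    rwa [eLpNorm_eq_lintegral_rpow_enorm_toReal hp₀ hp,
      eLpNorm_eq_lintegral_rpow_enorm_toReal hp₀ hp,
      ENNReal.rpow_le_rpow_iff (one_div_pos.2 hpos)] at hnorm
  have hfin : ∫⁻ x, ‖f x‖ₑ ^ p.toReal ∂μ ≠ ∞ :=
    (lintegral_rpow_enorm_lt_top_of_eLpNorm_lt_top hp₀ hp (Lp.eLpNorm_lt_top f)).ne
  filter_upwards [ae_eq_of_ae_le_of_lintegral_le hle hfin
    ((Lp.aestronglyMeasurable g).enorm.pow_const _) hint] with x hx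
  exact enorm_eq_iff_norm_eq.1 (ENNReal.rpow_left_injective hpos.ne' hx)

end Lp

section ConstrainedLp

variable {Ω E : Type*} [NormedAddCommGroup E] [InnerProductSpace ℝ E] {F : MeasurableSpace Ω}
  {μ : Measure Ω} {p : ℝ≥0∞} {Γ : Set E} {π : E → E}

theorem memLp_comp_of_isMetricProj (hconv : Convex ℝ Γ) (hπ : ∀ x, IsMetricProj Γ x (π x))
    {f g : Ω → E} (hf : MemLp f p μ) (hg : MemLp g p μ) (hgΓ : ∀ᵐ ω ∂μ, g ω ∈ Γ) :
    MemLp (π ∘ f) p μ := by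
  have hfix : π ∘ g =ᵐ[μ] g := by
    filter_upwards [hgΓ] with ω hω
    exact (hπ (g ω)).unique hconv ⟨hω, by simp⟩
  exact memLp_comp_of_lipschitzWith (lipschitzWith_one_of_isMetricProj hconv hπ) hf hg
    (hg.ae_eq hfix.symm)

variable [Fact (1 ≤ p)] {u v : Lp E p μ}

theorem ae_isMetricProj_of_isMetricProj (hp : p ≠ ∞) (hconv : Convex ℝ Γ)
    (hπ : ∀ x, IsMetricProj Γ x (π x))
    (hv : IsMetricProj {w : Lp E p μ | ∀ᵐ ω ∂μ, w ω ∈ Γ} u v) :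
    ∀ᵐ ω ∂μ, IsMetricProj Γ (u ω) (v ω) := by
  have hvΓ : ∀ᵐ ω ∂μ, v ω ∈ Γ := hv.1
  have hmem : MemLp (π ∘ u) p μ :=
    memLp_comp_of_isMetricProj hconv hπ (Lp.memLp u) (Lp.memLp v) hvΓ
  let w : Lp E p μ := hmem.toLp
  have hw : w =ᵐ[μ] π ∘ u := hmem.coeFn_toLp
  have hwΓ : ∀ᵐ ω ∂μ, w ω ∈ Γ := hw.mono fun ω hω => hω ▸ (hπ (u ω)).1
  have huv : ⇑(u - v) =ᵐ[μ] fun ω => u ω - v ω := Lp.coeFn_sub u v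
  have huw : ⇑(u - w) =ᵐ[μ] fun ω => u ω - π (u ω) :=
    (Lp.coeFn_sub u w).trans (hw.mono fun ω hω => congrArg (u ω - ·) hω)
  have hcloser : ∀ᵐ ω ∂μ, ‖(u - w) ω‖ ≤ ‖(u - v) ω‖ := by
    filter_upwards [huw, huv, hvΓ] with ω huwω huvω hvω
    rw [huwω, huvω]
    exact (hπ (u ω)).2 (v ω) hvω
  have hdist : ∀ᵐ ω ∂μ, ‖(u - w) ω‖ = ‖(u - v) ω‖ :=
    ae_norm_eq_of_ae_norm_le_of_norm_le (zero_lt_one.trans_le Fact.out).ne' hp hcloser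
      (hv.2 w hwΓ)
  filter_upwards [hdist, huw, huv, hvΓ] with ω hdistω huwω huvω hvω
  rw [huwω, huvω] at hdistω
  exact ⟨hvω, fun y hy => hdistω ▸ (hπ (u ω)).2 y hy⟩

end ConstrainedLp

theorem stmt5_general {Ω E : Type*} [NormedAddCommGroup E] [InnerProductSpace ℝ E]
    {F G : MeasurableSpace Ω} {μ : Measure[F] Ω} {p : ℝ≥0∞} [Fact (1 ≤ p)] (hp : p ≠ ∞)
    {Γ : Set E} (hΓ : IsComplete Γ) (hconv : Convex ℝ Γ) {u v : Lp E p μ}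
    (hv : IsMetricProj {w : Lp E p μ | ∀ᵐ ω ∂μ, w ω ∈ Γ} u v)
    (hu : AEStronglyMeasurable[G] u μ) : AEStronglyMeasurable[G] v μ := by
  rcases Γ.eq_empty_or_nonempty with rfl | hne
  · obtain rfl : μ = 0 := ae_eq_bot.1 (Filter.eventually_false_iff_eq_bot.1 hv.1)
    exact aestronglyMeasurable_zero_measure v
  · choose π hπ using exists_isMetricProj hne hΓ hconv
    have hcont : Continuous π := (lipschitzWith_one_of_isMetricProj hconv hπ).continuous
    have hvu : v =ᵐ[μ] π ∘ u :=
      (ae_isMetricProj_of_isMetricProj hp hconv hπ hv).mono fun ω hω =>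
        hω.unique hconv (hπ (u ω))
    exact (hcont.comp_aestronglyMeasurable hu).congr hvu.symm

/-- The metric projection in `L²(Ω,F,P;ℝ^d)` onto the almost-sure constraint set
`𝒰^as = {u : u(ω) ∈ Γ a.s.}` maps the measurability subspace
`𝒰^me = {u : u is a.e. equal to a G-measurable function}` into itself:
if `u` is a.e. equal to a `G`-measurable function, so is `Proj_{𝒰^as}(u)`. -/
theorem stmt5 {Ω : Type*} [F : MeasurableSpace Ω] (P : Measure Ω) [IsProbabilityMeasure P]
    (G : MeasurableSpace Ω) (hG : G ≤ F)
    (d : ℕ) (hd : 1 ≤ d) (Γ : Set (EuclideanSpace ℝ (Fin d)))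
    (hΓne : Γ.Nonempty) (hΓcl : IsClosed Γ) (hΓcv : Convex ℝ Γ)
    (projU : Lp (EuclideanSpace ℝ (Fin d)) 2 P → Lp (EuclideanSpace ℝ (Fin d)) 2 P)
    (hprojU : ∀ u, IsMetricProj {v : Lp (EuclideanSpace ℝ (Fin d)) 2 P |
        ∀ᵐ ω ∂P, v ω ∈ Γ} u (projU u))
    (u : Lp (EuclideanSpace ℝ (Fin d)) 2 P)
    (hu : ∃ g : Ω → EuclideanSpace ℝ (Fin d), Measurable[G] g ∧ ⇑u =ᵐ[P] g) :
    ∃ g : Ω → EuclideanSpace ℝ (Fin d), Measurable[G] g ∧ ⇑(projU u) =ᵐ[P] g := by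
  obtain ⟨g, hg, hug⟩ := hu
  exact (stmt5_general ENNReal.ofNat_ne_top hΓcl.isComplete hΓcv (hprojU u)
    ⟨g, hg.stronglyMeasurable, hug⟩).imp fun _ h => ⟨h.1.measurable, h.2⟩
end
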